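/- arXiv:2307.07376 — 2 statements merged into one kernel-verified Lean document; each statement's English description precedes it below -/
import Mathlib

section
/- Let a, b, c, d be integers and let S₁ = {(x,y,z) ∈ ℚ_p³ : v(x) ≥ a, v(y) ≥ b, v(z) ≥ c, v(xz) ≥ d, 2·v(y) ≥ d}. Then vol(S₁) ≤ (1 + max(0, d − a − c)) · p^{−max(d/2, b) − max(d, a+c)}, where the exponents are real numbers. -/
/-! The set `S₁` splits as a condition on `y`, which cuts out a ball, and a condition on `(x, z)`.
With `e = max d (a + c)` and `n = e - a - c`, the `(x, z)`-part is covered by the `n + 1` boxes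
`{v x ≥ a + i} × {v z ≥ e - a - i}`, `0 ≤ i ≤ n`: take `i = n` if `v x ≥ a + n`, and
`i = v x - a` otherwise. Each box has volume `p ^ (-e)`, and the `y`-ball
`{v y ≥ max b ⌈d / 2⌉}` has volume at most `p ^ (-max (d / 2) b)`, so the bound follows by
subadditivity (`S1_subset`). The volume of the ball `{v x ≥ k}` is `p ^ (-k)`
(`padicHaar_vBall`), because a ball is the disjoint union of `p` translates of the next smaller
one (`padicHaar_vBall_succ`). -/


open MeasureTheory

noncomputable instance (p : ℕ) [Fact p.Prime] : MeasurableSpace ℚ_[p] := borel ℚ_[p]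
instance (p : ℕ) [Fact p.Prime] : BorelSpace ℚ_[p] := ⟨rfl⟩

open scoped Classical in
/-- The additive `p`-adic valuation on `ℚ_[p]`, valued in `ℤ ∪ {∞}`, normalized by
`v p = 1` and `v 0 = ∞`. -/
noncomputable def padicV {p : ℕ} [Fact p.Prime] (x : ℚ_[p]) : WithTop ℤ :=
  if x = 0 then ⊤ else (x.valuation : WithTop ℤ)

/-- The closed unit ball `ℤ_p` as a positive compact subset of `ℚ_p`. -/
noncomputable def unitBallCompacts (p : ℕ) [Fact p.Prime] :
    TopologicalSpace.PositiveCompacts ℚ_[p] where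
  carrier := Metric.closedBall 0 1
  isCompact' := isCompact_closedBall 0 1
  interior_nonempty' := by
    refine ⟨0, ?_⟩
    exact interior_maximal Metric.ball_subset_closedBall Metric.isOpen_ball
      (Metric.mem_ball_self one_pos)

/-- The Haar measure on `ℚ_p` normalized so that `ℤ_p` has volume `1`. -/
noncomputable def padicHaar (p : ℕ) [Fact p.Prime] : Measure ℚ_[p] :=
  Measure.addHaarMeasure (unitBallCompacts p)

/-- The Haar measure on `ℚ_p³` normalized so that `ℤ_p³` has volume `1`. -/
noncomputable def padicHaar3 (p : ℕ) [Fact p.Prime] : Measure (ℚ_[p] × ℚ_[p] × ℚ_[p]) :=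
  (padicHaar p).prod ((padicHaar p).prod (padicHaar p))

/-- The ball `{x : v x ≥ k}` of `ℚ_p`, that is `p ^ k ℤ_p`. -/
def vBall (p : ℕ) [Fact p.Prime] (k : ℤ) : Set ℚ_[p] :=
  Metric.closedBall 0 ((p : ℝ) ^ (-k))

lemma one_lt_p (p : ℕ) [hp : Fact p.Prime] : (1 : ℝ) < p := by
  exact_mod_cast hp.out.one_lt

lemma mem_vBall {p : ℕ} [Fact p.Prime] {k : ℤ} {x : ℚ_[p]} :
    x ∈ vBall p k ↔ (k : WithTop ℤ) ≤ padicV x := by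
  unfold vBall padicV
  split_ifs with h
  · subst h
    simp only [Metric.mem_closedBall, dist_self, le_top, iff_true]
    positivity
  · rw [mem_closedBall_zero_iff, Padic.norm_eq_zpow_neg_valuation h,
      zpow_le_zpow_iff_right₀ (one_lt_p p), WithTop.coe_le_coe]
    omega

/-- The cosets of `p ^ (k + 1) ℤ_p` in `p ^ k ℤ_p` are represented by `j p ^ k`, `0 ≤ j < p`. -/
lemma vBall_eq_biUnion (p : ℕ) [hp : Fact p.Prime] (k : ℤ) :
    vBall p k = ⋃ j ∈ Finset.range p,
      Metric.closedBall ((j : ℚ_[p]) * (p : ℚ_[p]) ^ k) ((p : ℝ) ^ (-(k + 1))) := by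
  have hp0 : (p : ℚ_[p]) ≠ 0 := by exact_mod_cast hp.out.ne_zero
  have hpr : (0 : ℝ) < p := zero_lt_one.trans (one_lt_p p)
  ext x
  simp only [Set.mem_iUnion, Finset.mem_range, exists_prop, Metric.mem_closedBall, dist_eq_norm,
    vBall, sub_zero]
  -- `x ∈ p ^ k ℤ_p` is compared with the first digit of `u = x / p ^ k`.
  have key : ∀ j : ℕ, ‖x - j * (p : ℚ_[p]) ^ k‖ =
      ‖x * (p : ℚ_[p]) ^ (-k) - j‖ * (p : ℝ) ^ (-k) := by
    intro j
    rw [← Padic.norm_p_zpow, ← norm_mul, sub_mul, mul_assoc, ← zpow_add₀ hp0]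
    simp
  constructor
  · intro hx
    have hu : ‖x * (p : ℚ_[p]) ^ (-k)‖ ≤ 1 := by
      have := key 0
      simp only [Nat.cast_zero, zero_mul, sub_zero] at this
      rw [this] at hx
      exact le_of_mul_le_mul_right (by simpa using hx) (zpow_pos hpr (-k))
    let u : ℤ_[p] := ⟨_, hu⟩
    refine ⟨u.zmodRepr, u.zmodRepr_lt_p, ?_⟩
    have h1 := u.norm_sub_zmodRepr_lt_one
    rw [PadicInt.norm_def, PadicInt.coe_sub, PadicInt.coe_natCast] at h1
    have h2 : ‖x * (p : ℚ_[p]) ^ (-k) - (u.zmodRepr : ℚ_[p])‖ < (p : ℝ) ^ (0 : ℤ) := by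
      rw [zpow_zero]; exact h1
    rw [Padic.norm_lt_pow_iff_norm_le_pow_sub_one] at h2
    rw [key, show -(k + 1) = (0 - 1) + -k by ring, zpow_add₀ hpr.ne']
    gcongr
  · rintro ⟨j, -, hj⟩
    have h1 : ‖(j : ℚ_[p]) * (p : ℚ_[p]) ^ k‖ ≤ (p : ℝ) ^ (-k) := by
      rw [norm_mul, Padic.norm_p_zpow]
      have : ‖(j : ℚ_[p])‖ ≤ 1 := by exact_mod_cast Padic.norm_int_le_one (p := p) j
      exact mul_le_of_le_one_left (by positivity) this
    have h2 : (p : ℝ) ^ (-(k + 1)) ≤ (p : ℝ) ^ (-k) :=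
      zpow_le_zpow_right₀ (one_lt_p p).le (by omega)
    calc ‖x‖ = ‖(x - j * (p : ℚ_[p]) ^ k) + j * (p : ℚ_[p]) ^ k‖ := by simp
      _ ≤ max _ _ := Padic.nonarchimedean _ _
      _ ≤ _ := max_le (hj.trans h2) h1

lemma pairwiseDisjoint_vBall_cosets (p : ℕ) [hp : Fact p.Prime] (k : ℤ) :
    Set.PairwiseDisjoint (Finset.range p : Set ℕ) fun j : ℕ =>
      Metric.closedBall ((j : ℚ_[p]) * (p : ℚ_[p]) ^ k) ((p : ℝ) ^ (-(k + 1))) := by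
  have hpr : (0 : ℝ) < p := zero_lt_one.trans (one_lt_p p)
  intro i hi j hj hij
  simp only [Finset.coe_range, Set.mem_Iio] at hi hj
  refine Set.disjoint_left.2 fun x hxi hxj => ?_
  rw [Metric.mem_closedBall, dist_eq_norm] at hxi hxj
  -- A common point would force `|i - j| ≤ 1 / p`, so `p ∣ i - j`.
  have h : ‖((i - j : ℤ) : ℚ_[p])‖ * (p : ℝ) ^ (-k) ≤ (p : ℝ) ^ (-(k + 1)) := by
    rw [← Padic.norm_p_zpow, ← norm_mul]
    calc _ = ‖(x - j * (p : ℚ_[p]) ^ k) + -(x - i * (p : ℚ_[p]) ^ k)‖ := by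
            congr 1; push_cast; ring
      _ ≤ max _ _ := Padic.nonarchimedean _ _
      _ ≤ _ := max_le hxj (by rwa [norm_neg])
  rw [show -(k + 1) = -1 + -k by ring, zpow_add₀ hpr.ne'] at h
  have h1 : ‖((i - j : ℤ) : ℚ_[p])‖ < 1 := by
    refine (le_of_mul_le_mul_right h (zpow_pos hpr _)).trans_lt ?_
    rw [zpow_neg_one]
    exact inv_lt_one_of_one_lt₀ (one_lt_p p)
  rw [Padic.norm_intCast_lt_one_iff] at h1
  have := Int.eq_zero_of_abs_lt_dvd h1 (by rw [abs_lt]; omega)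
  omega

instance (p : ℕ) [Fact p.Prime] : (padicHaar p).IsAddHaarMeasure := by
  unfold padicHaar; infer_instance

lemma padicHaar_vBall_succ (p : ℕ) [Fact p.Prime] (k : ℤ) :
    padicHaar p (vBall p k) = p * padicHaar p (vBall p (k + 1)) := by
  rw [vBall_eq_biUnion, measure_biUnion_finset (pairwiseDisjoint_vBall_cosets p k)
    fun _ _ => Metric.isClosed_closedBall.measurableSet]
  have : ∀ c : ℚ_[p], padicHaar p (Metric.closedBall c ((p : ℝ) ^ (-(k + 1)))) =
      padicHaar p (vBall p (k + 1)) := by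
    intro c
    rw [← measure_preimage_add (padicHaar p) c, preimage_add_closedBall, sub_self, vBall]
  simp only [this, Finset.sum_const, Finset.card_range, nsmul_eq_mul]

/-- The ball `p ^ k ℤ_p` has volume `p ^ (-k)`. -/
lemma padicHaar_vBall (p : ℕ) [hp : Fact p.Prime] (k : ℤ) :
    padicHaar p (vBall p k) = ENNReal.ofReal ((p : ℝ) ^ (-k)) := by
  have hpr : (0 : ℝ) < p := zero_lt_one.trans (one_lt_p p)
  have step : ∀ k : ℤ, ENNReal.ofReal ((p : ℝ) ^ (-k)) =
      p * ENNReal.ofReal ((p : ℝ) ^ (-(k + 1))) := by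
    intro k
    rw [← ENNReal.ofReal_natCast, ← ENNReal.ofReal_mul hpr.le, ← zpow_one_add₀ hpr.ne']
    congr 2; ring
  have hp0 : (p : ENNReal) ≠ 0 := by exact_mod_cast hp.out.ne_zero
  induction k using Int.induction_on with
  | zero =>
    have := Measure.addHaarMeasure_self (K₀ := unitBallCompacts p)
    rw [vBall, neg_zero, zpow_zero, ENNReal.ofReal_one]
    exact this
  | succ i ih =>
    rw [padicHaar_vBall_succ, step] at ih
    exact (ENNReal.mul_right_inj hp0 (ENNReal.natCast_ne_top p)).1 ih
  | pred i ih => rw [padicHaar_vBall_succ, step, sub_add_cancel, ih]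

/-- The covering of `S₁` by `n + 1` boxes, where `max d (a + c) = a + c + n`. -/
lemma S1_subset (p : ℕ) [Fact p.Prime] (a b c d : ℤ) (n : ℕ) (hn : max d (a + c) = a + c + n) :
    {w : ℚ_[p] × ℚ_[p] × ℚ_[p] |
        (a : WithTop ℤ) ≤ padicV w.1 ∧ (b : WithTop ℤ) ≤ padicV w.2.1 ∧
        (c : WithTop ℤ) ≤ padicV w.2.2 ∧
        (d : WithTop ℤ) ≤ padicV (w.1 * w.2.2) ∧
        (d : WithTop ℤ) ≤ 2 * padicV w.2.1} ⊆
      ⋃ i ∈ Finset.range (n + 1),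
        vBall p (a + i) ×ˢ vBall p (max b ((d + 1) / 2)) ×ˢ vBall p (c + n - i) := by
  rintro ⟨x, y, z⟩ ⟨hx, hy, hz, hxz, hyd⟩
  dsimp only at hx hy hz hxz hyd
  have hy' : y ∈ vBall p (max b ((d + 1) / 2)) := by
    rw [mem_vBall]
    unfold padicV at hy hyd ⊢
    split_ifs at hy hyd ⊢ with h
    · exact le_top
    · have h2 : (2 : WithTop ℤ) * (y.valuation : WithTop ℤ) = ((2 * y.valuation : ℤ) : WithTop ℤ) :=
        (WithTop.coe_mul 2 y.valuation).symm
      rw [h2] at hyd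
      rw [WithTop.coe_le_coe] at hy hyd ⊢
      omega
  simp only [Set.mem_iUnion, Finset.mem_range, exists_prop, Set.mem_prod]
  by_cases hxn : ((a + n : ℤ) : WithTop ℤ) ≤ padicV x
  · refine ⟨n, by omega, mem_vBall.2 (by exact_mod_cast hxn), hy', mem_vBall.2 ?_⟩
    simpa using hz
  · have hx0 : x ≠ 0 := by
      rintro rfl
      simp [padicV] at hxn
    rw [padicV, if_neg hx0, WithTop.coe_le_coe] at hx hxn
    refine ⟨(x.valuation - a).toNat, by omega, mem_vBall.2 ?_, hy', mem_vBall.2 ?_⟩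
    · rw [padicV, if_neg hx0, WithTop.coe_le_coe]
      omega
    · by_cases hz0 : z = 0
      · simp [padicV, hz0]
      · rw [padicV, if_neg (mul_ne_zero hx0 hz0), WithTop.coe_le_coe,
          Padic.valuation_mul hx0 hz0] at hxz
        rw [padicV, if_neg hz0, WithTop.coe_le_coe]
        omega

/-- For integers `a, b, c, d`, the volume of
`S₁ = {(x,y,z) : v x ≥ a, v y ≥ b, v z ≥ c, v (xz) ≥ d, 2 v y ≥ d}` is at most
`(1 + max(0, d-a-c)) p^(-max(d/2, b) - max(d, a+c))`. -/
theorem volume_S1_le (p : ℕ) [Fact p.Prime] (a b c d : ℤ) :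
    padicHaar3 p {w : ℚ_[p] × ℚ_[p] × ℚ_[p] |
        (a : WithTop ℤ) ≤ padicV w.1 ∧ (b : WithTop ℤ) ≤ padicV w.2.1 ∧
        (c : WithTop ℤ) ≤ padicV w.2.2 ∧
        (d : WithTop ℤ) ≤ padicV (w.1 * w.2.2) ∧
        (d : WithTop ℤ) ≤ 2 * padicV w.2.1} ≤
      ENNReal.ofReal ((1 + max 0 ((d : ℝ) - (a : ℝ) - (c : ℝ))) *
        (p : ℝ) ^ (-(max ((d : ℝ) / 2) (b : ℝ)) - max (d : ℝ) ((a : ℝ) + (c : ℝ)))) := by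
  have hp1 := one_lt_p p
  have hpr : (0 : ℝ) < p := zero_lt_one.trans hp1
  obtain ⟨n, hn⟩ : ∃ n : ℕ, max d (a + c) = a + c + n :=
    ⟨(max d (a + c) - (a + c)).toNat, by omega⟩
  set m := max b ((d + 1) / 2) with hm
  have hnR : max (d : ℝ) ((a : ℝ) + c) = a + c + n := by exact_mod_cast hn
  have hn' : max 0 ((d : ℝ) - a - c) = n := by
    have : max 0 (d - a - c) = (n : ℤ) := by omega
    exact_mod_cast this
  have hmR : max ((d : ℝ) / 2) b ≤ m := by
    refine max_le ?_ (by exact_mod_cast le_max_left _ _)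
    have : d ≤ 2 * m := by omega
    have : (d : ℝ) ≤ 2 * m := by exact_mod_cast this
    linarith
  have hbox : ∀ i : ℕ,
      padicHaar3 p (vBall p (a + i) ×ˢ vBall p m ×ˢ vBall p (c + n - i)) =
        ENNReal.ofReal ((p : ℝ) ^ (-m - (a + c + n))) := by
    intro i
    rw [padicHaar3, Measure.prod_prod, Measure.prod_prod, padicHaar_vBall, padicHaar_vBall,
      padicHaar_vBall, ← ENNReal.ofReal_mul (by positivity), ← ENNReal.ofReal_mul (by positivity),
      ← zpow_add₀ hpr.ne', ← zpow_add₀ hpr.ne']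
    congr 2; ring
  refine (measure_mono (S1_subset p a b c d n hn)).trans
    ((measure_biUnion_finset_le _ _).trans ?_)
  rw [Finset.sum_congr rfl fun i _ => hbox i, Finset.sum_const, Finset.card_range, nsmul_eq_mul,
    ← ENNReal.ofReal_natCast, ← ENNReal.ofReal_mul (by positivity), hn', hnR]
  refine ENNReal.ofReal_le_ofReal ?_
  rw [← Real.rpow_intCast]
  push_cast
  rw [add_comm (n : ℝ) 1]
  gcongr
  exact hp1.le
end

section
/- Let a, b, c, d be integers and let S₂ = {(x,y,z) ∈ ℚ_p³ : v(x) ≥ a, v(y) ≥ b, v(z) ≥ c, v(xz) < d, v(xz − y²) ≥ d}. Then vol(S₂) ≤ max(0, d − c − a) · p^{−b − d}. -/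
/-! The condition `v (xz) < d` forces `x ≠ 0`, and together with `v z ≥ c` it bounds `v x`, so
`i = v x` satisfies `a ≤ i < d - c`. For fixed `x` and `y` with `v x = i`, the condition
`v (xz - y²) ≥ d` says that `z` lies in the ball of radius `p^(-(d - i))` about `y² / x`. Since `x`
ranges over a subset of the ball of radius `p^(-i)`, and `y` over the ball of radius `p^(-b)`,
Fubini bounds the part of `S₂` with `v x = i` by `p^(-i) p^(-b) p^(i - d) = p^(-b - d)`
(`padicHaar3_slice_le`). There are `max(0, d - c - a)` values of `i`.

The volume of a ball of radius `p^(-n)` is `p^(-n)` (`padicHaar_closedBall`): such a ball splits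
into `p` disjoint translates of a ball of radius `p^(-(n + 1))`, and `ℤ_p` has volume `1`. -/

open MeasureTheory

lemma le_padicV_iff {p : ℕ} [Fact p.Prime] (n : ℤ) (x : ℚ_[p]) :
    (n : WithTop ℤ) ≤ padicV x ↔ ‖x‖ ≤ (p : ℝ) ^ (-n) := by
  have hp : (1 : ℝ) < p := by exact_mod_cast (Fact.out : p.Prime).one_lt
  unfold padicV
  split_ifs with h
  · simp only [h, le_top, norm_zero, true_iff]
    positivity
  · rw [Padic.norm_eq_zpow_neg_valuation h, zpow_le_zpow_iff_right₀ hp, WithTop.coe_le_coe,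
      neg_le_neg_iff]

instance inst_s4 (p : ℕ) [Fact p.Prime] : (padicHaar p).IsAddHaarMeasure := by
  unfold padicHaar
  infer_instance

lemma padicHaar_closedBall_translate (p : ℕ) [Fact p.Prime] (x : ℚ_[p]) (r : ℝ) :
    padicHaar p (Metric.closedBall x r) = padicHaar p (Metric.closedBall 0 r) := by
  have h : (fun y => -x + y) ⁻¹' Metric.closedBall 0 r = Metric.closedBall x r := by
    ext y
    simp [dist_eq_norm, neg_add_eq_sub]
  rw [← h, measure_preimage_add]

/-- A ball is the union of `p` balls of the next smaller radius, centred at the multiples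
`j p ^ n`, `0 ≤ j < p`. -/
lemma closedBall_eq_iUnion (p : ℕ) [hp : Fact p.Prime] (n : ℤ) :
    Metric.closedBall (0 : ℚ_[p]) ((p : ℝ) ^ (-n)) =
      ⋃ j ∈ Finset.range p,
        Metric.closedBall ((j : ℚ_[p]) * (p : ℚ_[p]) ^ n) ((p : ℝ) ^ (-(n + 1))) := by
  have hp1 : (1 : ℝ) < p := by exact_mod_cast hp.out.one_lt
  have hp0 : (p : ℚ_[p]) ≠ 0 := by exact_mod_cast hp.out.ne_zero
  ext x
  simp only [Metric.mem_closedBall, dist_eq_norm, sub_zero, Set.mem_iUnion, Finset.mem_range,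
    exists_prop]
  constructor
  · intro hx
    have hu : ‖x * (p : ℚ_[p]) ^ (-n)‖ ≤ 1 := by
      rw [norm_mul, Padic.norm_p_zpow, neg_neg]
      calc ‖x‖ * (p : ℝ) ^ n ≤ (p : ℝ) ^ (-n) * (p : ℝ) ^ n := by gcongr
        _ = 1 := by rw [← zpow_add₀ (by positivity)]; simp
    obtain ⟨u, hux⟩ : ∃ u : ℤ_[p], (u : ℚ_[p]) = x * (p : ℚ_[p]) ^ (-n) := ⟨⟨_, hu⟩, rfl⟩
    obtain ⟨j, hj, hm⟩ := PadicInt.exists_mem_range u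
    refine ⟨j, hj, ?_⟩
    rw [IsLocalRing.mem_maximalIdeal, PadicInt.mem_nonunits, PadicInt.norm_def,
      PadicInt.coe_sub, PadicInt.coe_natCast, hux] at hm
    have h1 : ‖x * (p : ℚ_[p]) ^ (-n) - j‖ ≤ (p : ℝ) ^ (-1 : ℤ) := by
      rw [Padic.norm_le_pow_iff_norm_lt_pow_add_one]
      simpa using hm
    have h2 : x - j * (p : ℚ_[p]) ^ n = (x * (p : ℚ_[p]) ^ (-n) - j) * (p : ℚ_[p]) ^ n := by
      rw [sub_mul, mul_assoc, ← zpow_add₀ hp0]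
      simp
    rw [h2, norm_mul, Padic.norm_p_zpow, neg_add, add_comm, zpow_add₀ (by positivity)]
    gcongr
  · rintro ⟨j, -, hj⟩
    have h1 : x = (x - j * (p : ℚ_[p]) ^ n) + j * (p : ℚ_[p]) ^ n := by ring
    rw [h1]
    refine (Padic.nonarchimedean _ _).trans (max_le (hj.trans ?_) ?_)
    · exact zpow_le_zpow_right₀ hp1.le (by lia)
    · rw [norm_mul, Padic.norm_p_zpow]
      refine mul_le_of_le_one_left (by positivity) ?_
      exact_mod_cast Padic.norm_int_le_one (p := p) (j : ℤ)

lemma closedBall_pairwiseDisjoint (p : ℕ) [hp : Fact p.Prime] (n : ℤ) :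
    (Finset.range p : Set ℕ).PairwiseDisjoint fun j : ℕ =>
      Metric.closedBall ((j : ℚ_[p]) * (p : ℚ_[p]) ^ n) ((p : ℝ) ^ (-(n + 1))) := by
  have hp1 : (1 : ℝ) < p := by exact_mod_cast hp.out.one_lt
  intro j hj k hk hjk
  simp only [Finset.coe_range, Set.mem_Iio] at hj hk
  refine Set.disjoint_left.2 fun x hx hx' => hjk ?_
  simp only [Metric.mem_closedBall, dist_eq_norm] at hx hx'
  have h1 : (((j : ℤ) - (k : ℤ) : ℤ) : ℚ_[p]) * (p : ℚ_[p]) ^ n =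
      (x - k * (p : ℚ_[p]) ^ n) + -(x - j * (p : ℚ_[p]) ^ n) := by
    push_cast
    ring
  have h2 : ‖(((j : ℤ) - (k : ℤ) : ℤ) : ℚ_[p]) * (p : ℚ_[p]) ^ n‖ ≤ (p : ℝ) ^ (-(n + 1)) := by
    rw [h1]
    refine (Padic.nonarchimedean _ _).trans (max_le hx' ?_)
    rwa [norm_neg]
  have h3 : ‖(((j : ℤ) - (k : ℤ) : ℤ) : ℚ_[p])‖ < 1 := by
    rw [norm_mul, Padic.norm_p_zpow] at h2
    have h4 : (p : ℝ) ^ (-(n + 1)) < 1 * (p : ℝ) ^ (-n) := by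
      rw [one_mul]
      exact zpow_lt_zpow_right₀ hp1 (by lia)
    exact lt_of_mul_lt_mul_right (h2.trans_lt h4) (by positivity)
  rw [Padic.norm_intCast_lt_one_iff] at h3
  have h5 := Int.eq_zero_of_abs_lt_dvd h3 (by rw [abs_lt]; constructor <;> lia)
  lia

lemma padicHaar_closedBall_succ (p : ℕ) [hp : Fact p.Prime] (n : ℤ) :
    padicHaar p (Metric.closedBall 0 ((p : ℝ) ^ (-n))) =
      p * padicHaar p (Metric.closedBall 0 ((p : ℝ) ^ (-(n + 1)))) := by
  rw [closedBall_eq_iUnion, measure_biUnion_finset (closedBall_pairwiseDisjoint p n)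
    fun _ _ => Metric.isClosed_closedBall.measurableSet]
  simp [padicHaar_closedBall_translate p (_ * _)]

lemma padicHaar_closedBall (p : ℕ) [hp : Fact p.Prime] (x : ℚ_[p]) (n : ℤ) :
    padicHaar p (Metric.closedBall x ((p : ℝ) ^ (-n))) = ENNReal.ofReal ((p : ℝ) ^ (-n)) := by
  have hp0 : (0 : ℝ) < p := by exact_mod_cast hp.out.pos
  have hcast : ∀ m : ℤ, ENNReal.ofReal ((p : ℝ) ^ (-m)) =
      p * ENNReal.ofReal ((p : ℝ) ^ (-(m + 1))) := by
    intro m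
    rw [← ENNReal.ofReal_natCast p, ← ENNReal.ofReal_mul hp0.le]
    congr 1
    rw [← zpow_one_add₀ hp0.ne']
    congr 1
    ring
  rw [padicHaar_closedBall_translate]
  induction n using Int.induction_on with
  | zero =>
    simp only [neg_zero, zpow_zero, ENNReal.ofReal_one]
    exact Measure.addHaarMeasure_self (K₀ := unitBallCompacts p)
  | succ m ih =>
    rw [padicHaar_closedBall_succ, hcast] at ih
    exact (ENNReal.mul_right_inj (by exact_mod_cast hp.out.ne_zero)
      (ENNReal.natCast_ne_top p)).1 ih
  | pred m ih =>
    rw [padicHaar_closedBall_succ, hcast, sub_add_cancel, ih]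

/-- Fubini bound: a set lying over `A`, all of whose sections have measure at most `C`. -/
lemma prod_le_of_section_le {α β : Type*} [MeasurableSpace α] [MeasurableSpace β]
    (μ : Measure α) (ν : Measure β) [SFinite ν] {T : Set (α × β)} (hT : MeasurableSet T)
    {A : Set α} (hA : MeasurableSet A) (C : ENNReal) (hTA : ∀ w ∈ T, w.1 ∈ A)
    (hC : ∀ x ∈ A, ν (Prod.mk x ⁻¹' T) ≤ C) : μ.prod ν T ≤ C * μ A := by
  rw [Measure.prod_apply hT, ← lintegral_indicator_const hA]
  refine lintegral_mono fun x => ?_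
  by_cases hx : x ∈ A
  · simpa [hx] using hC x hx
  · have : Prod.mk x ⁻¹' T = ∅ := Set.eq_empty_of_forall_notMem fun y hy => hx (hTA _ hy)
    simp [this]

/-- The part of `S₂` with `v x = i` has volume at most `p ^ (-b - d)`. -/
lemma padicHaar3_slice_le (p : ℕ) [hp : Fact p.Prime] (b d i : ℤ) :
    padicHaar3 p {w : ℚ_[p] × ℚ_[p] × ℚ_[p] | ‖w.1‖ = (p : ℝ) ^ (-i) ∧
        ‖w.2.1‖ ≤ (p : ℝ) ^ (-b) ∧ ‖w.1 * w.2.2 - w.2.1 ^ 2‖ ≤ (p : ℝ) ^ (-d)} ≤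
      ENNReal.ofReal ((p : ℝ) ^ (-b - d)) := by
  have hp0 : (0 : ℝ) < p := by exact_mod_cast hp.out.pos
  have hsphere : MeasurableSet {x : ℚ_[p] | ‖x‖ = (p : ℝ) ^ (-i)} :=
    (isClosed_eq continuous_norm continuous_const).measurableSet
  have hslice : ∀ x ∈ {x : ℚ_[p] | ‖x‖ = (p : ℝ) ^ (-i)},
      (padicHaar p).prod (padicHaar p) {v : ℚ_[p] × ℚ_[p] | ‖v.1‖ ≤ (p : ℝ) ^ (-b) ∧
        ‖x * v.2 - v.1 ^ 2‖ ≤ (p : ℝ) ^ (-d)} ≤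
      ENNReal.ofReal ((p : ℝ) ^ (-(d - i))) * ENNReal.ofReal ((p : ℝ) ^ (-b)) := by
    intro x (hx : ‖x‖ = _)
    have hx0 : x ≠ 0 := by
      rw [← norm_pos_iff, hx]
      positivity
    rw [← padicHaar_closedBall p 0 b]
    refine prod_le_of_section_le _ _ ?_ Metric.isClosed_closedBall.measurableSet _ ?_ ?_
    · simp only [Set.ofPred_and]
      refine ((isClosed_le ?_ continuous_const).inter
        (isClosed_le ?_ continuous_const)).measurableSet <;> fun_prop
    · intro w hw
      simpa using hw.1
    · intro y _
      rw [← padicHaar_closedBall p (y ^ 2 / x)]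
      refine measure_mono fun z hz => ?_
      have h1 : ‖x * z - y ^ 2‖ ≤ (p : ℝ) ^ (-d) := hz.2
      have h2 : x * z - y ^ 2 = x * (z - y ^ 2 / x) := by field_simp
      rw [h2, norm_mul, hx] at h1
      have h3 : (p : ℝ) ^ (-d) = (p : ℝ) ^ (-i) * (p : ℝ) ^ (-(d - i)) := by
        rw [← zpow_add₀ hp0.ne']
        congr 1
        ring
      rw [h3] at h1
      rw [Metric.mem_closedBall, dist_eq_norm]
      exact le_of_mul_le_mul_left h1 (by positivity)
  refine (prod_le_of_section_le _ _ ?_ hsphere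
    (ENNReal.ofReal ((p : ℝ) ^ (-(d - i))) * ENNReal.ofReal ((p : ℝ) ^ (-b))) ?_ ?_).trans
    ((mul_le_mul_right (measure_mono (t := Metric.closedBall 0 ((p : ℝ) ^ (-i))) ?_) _).trans
      (le_of_eq ?_))
  · simp only [Set.ofPred_and]
    refine ((isClosed_eq ?_ continuous_const).inter ((isClosed_le ?_ continuous_const).inter
      (isClosed_le ?_ continuous_const))).measurableSet <;> fun_prop
  · exact fun w hw => hw.1
  · exact fun x hx => (measure_mono fun v hv => hv.2).trans (hslice x hx)
  · intro x (hx : ‖x‖ = _)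
    simp [hx]
  · rw [padicHaar_closedBall, ← ENNReal.ofReal_mul (by positivity),
      ← ENNReal.ofReal_mul (by positivity), ← zpow_add₀ hp0.ne', ← zpow_add₀ hp0.ne']
    congr 2
    ring

/-- For integers `a, b, c, d`, the volume of
`S₂ = {(x,y,z) : v x ≥ a, v y ≥ b, v z ≥ c, v (xz) < d, v (xz - y²) ≥ d}` is at most
`max(0, d-c-a) p^(-b-d)`. -/
theorem volume_S2_le (p : ℕ) [Fact p.Prime] (a b c d : ℤ) :
    padicHaar3 p {w : ℚ_[p] × ℚ_[p] × ℚ_[p] |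
        (a : WithTop ℤ) ≤ padicV w.1 ∧ (b : WithTop ℤ) ≤ padicV w.2.1 ∧
        (c : WithTop ℤ) ≤ padicV w.2.2 ∧
        padicV (w.1 * w.2.2) < (d : WithTop ℤ) ∧
        (d : WithTop ℤ) ≤ padicV (w.1 * w.2.2 - w.2.1 ^ 2)} ≤
      ENNReal.ofReal (max 0 ((d : ℝ) - (c : ℝ) - (a : ℝ)) *
        (p : ℝ) ^ (-(b : ℝ) - (d : ℝ))) := by
  have hp0 : (0 : ℝ) < p := by exact_mod_cast (Fact.out : p.Prime).pos
  refine (measure_mono (t := ⋃ i ∈ Finset.Ico a (d - c),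
    {w : ℚ_[p] × ℚ_[p] × ℚ_[p] | ‖w.1‖ = (p : ℝ) ^ (-i) ∧ ‖w.2.1‖ ≤ (p : ℝ) ^ (-b) ∧
      ‖w.1 * w.2.2 - w.2.1 ^ 2‖ ≤ (p : ℝ) ^ (-d)}) ?_).trans ?_
  · rintro ⟨x, y, z⟩ ⟨hx, hy, hz, hxz, hd⟩
    dsimp only at hx hy hz hxz hd
    have h0 : x * z ≠ 0 := by
      intro h
      simp [padicV, h] at hxz
    have hx0 := left_ne_zero_of_mul h0
    have hz0 := right_ne_zero_of_mul h0
    simp only [padicV, if_neg h0, if_neg hx0, if_neg hz0, WithTop.coe_le_coe, WithTop.coe_lt_coe,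
      Padic.valuation_mul hx0 hz0] at hx hz hxz
    simp only [Set.mem_iUnion, Finset.mem_Ico, exists_prop]
    exact ⟨x.valuation, ⟨hx, by lia⟩, Padic.norm_eq_zpow_neg_valuation hx0,
      (le_padicV_iff b y).1 hy, (le_padicV_iff d _).1 hd⟩
  · refine (measure_biUnion_finset_le _ _).trans
      ((Finset.sum_le_sum fun i _ => padicHaar3_slice_le p b d i).trans (le_of_eq ?_))
    have hcard : max 0 ((d : ℝ) - c - a) = ((d - c - a).toNat : ℝ) := by
      rw [max_comm]
      exact_mod_cast (Int.toNat_eq_max (d - c - a)).symm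
    have hpow : (p : ℝ) ^ (-(b : ℝ) - (d : ℝ)) = (p : ℝ) ^ (-b - d) := by
      rw [← Real.rpow_intCast]
      push_cast
      rfl
    rw [Finset.sum_const, Int.card_Ico, hcard, hpow, ENNReal.ofReal_mul (by positivity),
      ENNReal.ofReal_natCast, nsmul_eq_mul]
end
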